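/- Let G be a finitely generated metabelian group. There is a constant C depending only on G such that for every finite index subgroup H of G containing the derived subgroup G', we have t(H^{ab}) ≤ C^{[G:H]}. -/

import Mathlib

/-- A group is metabelian if its derived subgroup is abelian. -/
def IsMetabelian (G : Type*) [Group G] : Prop :=
  ∀ x ∈ ⁅(⊤ : Subgroup G), (⊤ : Subgroup G)⁆, ∀ y ∈ ⁅(⊤ : Subgroup G), (⊤ : Subgroup G)⁆,
    x * y = y * x

/-!
Write `G` as the image of `π : F → G` with `F` free on a finite set `X`. As the integral group ring
of `F / F'` is Noetherian, finitely many elements `R` of `π.ker` generate it as a normal subgroup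
modulo `F''`. If `H` contains `G'` and has finite index, let `Q = G / H`, and let `p : F → Q` be the
composite map, with kernel `N`. Fox calculus embeds `N / N'` into the lattice `ℤ[Q] ^ X` of rank
`|X| [G : H]`, and `H / H'` becomes a subgroup of the quotient of this lattice by the span of the
`Q`-translates of the Fox derivatives of the elements of `R`. Their `ℓ¹`-norms are bounded by the
lengths of the elements of `R`, independently of `H`, so the determinants which count the torsion of
the quotient are at most `L ^ (|X| [G : H])` with `L` depending only on `R`.
-/

open Module
open scoped MonoidAlgebra

section TorsionBound

lemma natAbs_det_le_pow_of_sum_abs_row_le {n : Type*} [Fintype n] [DecidableEq n] {L : ℕ}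
    (A : Matrix n n ℤ) (hA : ∀ i, ∑ j, |A i j| ≤ L) : A.det.natAbs ≤ L ^ Fintype.card n := by
  zify
  calc |A.det| = |∑ σ : Equiv.Perm n, Equiv.Perm.sign σ • ∏ i, A i (σ i)| := by
        rw [← A.det_transpose, Matrix.det_apply]; rfl
    _ ≤ ∑ σ : Equiv.Perm n, ∏ i, |A i (σ i)| := by
        refine (Finset.abs_sum_le_sum_abs _ _).trans_eq (Finset.sum_congr rfl fun σ _ => ?_)
        rw [← AbsoluteValue.abs_apply, AbsoluteValue.map_units_int_smul, map_prod]
        rfl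
    _ ≤ ∑ f : n → n, ∏ i, |A i (f i)| := by
        rw [← Finset.sum_image (f := fun f : n → n => ∏ i, |A i (f i)|)
          (g := fun σ : Equiv.Perm n => (σ : n → n)) (DFunLike.coe_injective.injOn)]
        exact Finset.sum_le_sum_of_subset_of_nonneg (Finset.subset_univ _)
          fun _ _ _ => Finset.prod_nonneg fun _ _ => abs_nonneg _
    _ = ∏ i, ∑ j, |A i j| := by rw [Finset.prod_univ_sum, Fintype.piFinset_univ]
    _ ≤ ∏ _i : n, (L : ℤ) :=
        Finset.prod_le_prod (fun _ _ => Finset.sum_nonneg fun _ _ => abs_nonneg _) fun i _ => hA i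
    _ = _ := by simp

lemma exists_linearIndepOn_isTorsion_quotient {R M ι : Type*} [CommRing R] [IsDomain R]
    [AddCommGroup M] [Module R M] (v : ι → M)
    (hv : IsTorsion R (M ⧸ Submodule.span R (Set.range v))) :
    ∃ s : Set ι, LinearIndepOn R v s ∧ IsTorsion R (M ⧸ Submodule.span R (v '' s)) := by
  obtain ⟨s, hs, hmax⟩ := exists_maximal_linearIndepOn R v
  refine ⟨s, hs, ?_⟩
  set P := Submodule.span R (v '' s)
  have hle : Submodule.span R (Set.range v) ≤ (Submodule.torsion R (M ⧸ P)).comap P.mkQ := by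
    rw [Submodule.span_le]
    rintro _ ⟨i, rfl⟩
    by_cases hi : i ∈ s
    · have : P.mkQ (v i) = 0 :=
        (Submodule.Quotient.mk_eq_zero P).2 (Submodule.subset_span ⟨i, hi, rfl⟩)
      exact ⟨1, by rw [one_smul, this]⟩
    · obtain ⟨a, ha, hav⟩ := hmax i hi
      exact ⟨⟨a, mem_nonZeroDivisors_of_ne_zero ha⟩, (Submodule.Quotient.mk_eq_zero P).2 hav⟩
  rintro ⟨x⟩
  obtain ⟨a, ha⟩ := @hv (Submodule.Quotient.mk x)
  obtain ⟨b, hb⟩ := hle ((Submodule.Quotient.mk_eq_zero _).1 ha)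
  exact ⟨b * a, (mul_smul b a (P.mkQ x)).trans hb⟩

lemma disjoint_torsion_span_of_linearIndepOn {R M ι : Type*} [CommRing R] [AddCommGroup M]
    [Module R M] {v : ι → M} {s : Set ι} (hs : LinearIndepOn R v s) :
    Disjoint (Submodule.torsion R M) (Submodule.span R (v '' s)) := by
  rw [Submodule.disjoint_def]
  rintro x ⟨a, hax⟩ hx
  rw [Set.image_eq_range] at hx
  let c := (Basis.span hs).repr ⟨x, hx⟩
  have hc : c = 0 := by
    have hac : (a : R) • c = 0 := by
      rw [← map_smul, map_eq_zero_iff _ (LinearEquiv.injective _)]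
      exact Subtype.ext hax
    ext i
    exact (mul_right_mem_nonZeroDivisors_eq_zero_iff a.2).1
      ((mul_comm _ _).trans (DFunLike.congr_fun hac i))
  exact congrArg Subtype.val ((LinearEquiv.map_eq_zero_iff _).1 hc)

/-- The `ℓ¹`-norm of the coordinates of a vector of a lattice in a given basis. -/
noncomputable def l1Norm {ι A : Type*} [Fintype ι] [AddCommGroup A] (b : Basis ι ℤ A) (v : A) : ℤ :=
  ∑ i, |b.repr v i|

variable {ι A : Type*} [Fintype ι] [AddCommGroup A] (b : Basis ι ℤ A) {L : ℕ} {S : Set A}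

lemma l1Norm_basis (i : ι) : l1Norm b (b i) = 1 := by
  classical
  simp [l1Norm, Finsupp.single_apply, apply_ite abs]

lemma l1Norm_neg (v : A) : l1Norm b (-v) = l1Norm b v := by simp [l1Norm]

lemma l1Norm_add_le (v w : A) : l1Norm b (v + w) ≤ l1Norm b v + l1Norm b w := by
  rw [l1Norm, l1Norm, l1Norm, ← Finset.sum_add_distrib]
  gcongr with i
  simpa using abs_add_le _ _

lemma card_quotient_span_le_pow [Finite (A ⧸ Submodule.span ℤ S)]
    (hS : ∀ v ∈ S, l1Norm b v ≤ L) :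
    Nat.card (A ⧸ Submodule.span ℤ S) ≤ L ^ Fintype.card ι := by
  classical
  have : Module.Free ℤ A := .of_basis b
  have : Module.Finite ℤ A := .of_basis b
  obtain ⟨J, hJ, hJtors⟩ := exists_linearIndepOn_isTorsion_quotient (R := ℤ) ((↑) : S → A) (by
    rw [Subtype.range_coe]
    exact isAddTorsion_iff_isTorsion_int.1 isAddTorsion_of_finite)
  have hle : Submodule.span ℤ ((↑) '' J) ≤ Submodule.span ℤ S :=
    Submodule.span_mono (Subtype.coe_image_subset S J)
  rw [Set.image_eq_range] at hJtors hle
  set P := Submodule.span ℤ (Set.range fun i : J => ((i : S) : A))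
  have : Finite (A ⧸ P) := finite_of_fg_torsion _ hJtors
  let bP : Basis J ℤ P := Basis.span hJ
  have : Finite J := Module.Finite.finite_basis bP
  have e : J ≃ ι := Classical.choice <| Finite.card_eq.1 <| by
    rw [← finrank_eq_nat_card_basis bP, ← finrank_eq_nat_card_basis b, ← P.finiteQuotient_iff]
    infer_instance
  calc Nat.card (A ⧸ Submodule.span ℤ S) ≤ Nat.card (A ⧸ P) :=
        Nat.card_le_card_of_surjective _ (Submodule.factor_surjective hle)
    _ = (b.det ((↑) ∘ bP.reindex e)).natAbs := (P.natAbs_det_basis_change b _).symm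
    _ = (b.toMatrix ((↑) ∘ bP.reindex e)).transpose.det.natAbs := by
        rw [Matrix.det_transpose, b.det_apply]
    _ ≤ L ^ Fintype.card ι := natAbs_det_le_pow_of_sum_abs_row_le _ fun i => by
        have hrow : ((bP.reindex e i : P) : A) = (e.symm i : S) := by
          rw [bP.reindex_apply]
          exact congrArg Subtype.val (Basis.span_apply hJ _)
        exact hS _ (by rw [Function.comp_apply, hrow]; exact (e.symm i : S).2)

lemma finite_torsion_quotient_span_and_card_le (hL : 1 ≤ L) (hS : ∀ v ∈ S, l1Norm b v ≤ L) :
    Finite (AddCommGroup.torsion (A ⧸ Submodule.span ℤ S)) ∧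
      Nat.card (AddCommGroup.torsion (A ⧸ Submodule.span ℤ S)) ≤ L ^ Fintype.card ι := by
  have : Module.Finite ℤ A := .of_basis b
  -- Adjoining suitable basis vectors to `S` makes the quotient finite and keeps its torsion.
  set M := Submodule.span ℤ S
  obtain ⟨I, hI, htors⟩ := exists_linearIndepOn_isTorsion_quotient (R := ℤ) (M.mkQ ∘ b) (by
    rw [Set.range_comp, ← Submodule.map_span, b.span_eq, Submodule.map_top, Submodule.range_mkQ]
    exact isAddTorsion_iff_isTorsion_int.1 isAddTorsion_of_finite)
  have hdisj := disjoint_torsion_span_of_linearIndepOn hI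
  rw [Set.image_comp, ← Submodule.map_span] at htors hdisj
  set P := Submodule.span ℤ (b '' I)
  have : Finite ((A ⧸ M) ⧸ P.map M.mkQ) := finite_of_fg_torsion _ htors
  have hinj : Function.Injective
      (fun x : AddCommGroup.torsion (A ⧸ M) => (P.map M.mkQ).mkQ x) := by
    have := LinearMap.injOn_of_disjoint_ker (f := (P.map M.mkQ).mkQ) le_rfl
      (by rw [Submodule.ker_mkQ]; exact hdisj)
    rw [← Submodule.torsion_int]
    exact this.injective
  refine ⟨.of_injective _ hinj, ?_⟩
  have e := (M.quotientQuotientEquivQuotientSup P).toEquiv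
  rw [← Submodule.span_union] at e
  calc Nat.card (AddCommGroup.torsion (A ⧸ M)) ≤ Nat.card ((A ⧸ M) ⧸ P.map M.mkQ) :=
        Nat.card_le_card_of_injective _ hinj
    _ = Nat.card (A ⧸ Submodule.span ℤ (S ∪ b '' I)) := Nat.card_congr e
    _ ≤ L ^ Fintype.card ι := by
        have := Finite.of_equiv _ e
        refine card_quotient_span_le_pow b ?_
        rintro v (hv | ⟨i, -, rfl⟩)
        · exact hS v hv
        · rw [l1Norm_basis]
          exact_mod_cast hL

end TorsionBound

section FoxCalculus

variable {X Q : Type*} [Group Q]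

variable (X Q) in
/-- The action of `Q` on the free `ℤ[Q]`-module on `X`, in the multiplicative notation
required by `SemidirectProduct`. -/
noncomputable def translation : Q →* MulAut (Multiplicative (X →₀ ℤ[Q])) :=
  (MulAutMultiplicative _).symm.toMonoidHom.comp
    ((DistribMulAction.toAddAut _ _).comp (MonoidAlgebra.of ℤ Q).toHomUnits)

/-- The Magnus embedding (modulo the derived subgroup of `p.ker`): the generator `x` acts as the
affine map `v ↦ p x • v + eₓ` of the free `ℤ[Q]`-module on `X`. -/
noncomputable def magnusHom (p : FreeGroup X →* Q) :
    FreeGroup X →* Multiplicative (X →₀ ℤ[Q]) ⋊[translation X Q] Q :=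
  FreeGroup.lift fun x => ⟨.ofAdd (Finsupp.single x 1), p (FreeGroup.of x)⟩

/-- The vector of Fox derivatives `∂w/∂x`, `x : X`, with coefficients pushed to `ℤ[Q]`
along `p`. -/
noncomputable def foxDeriv (p : FreeGroup X →* Q) (w : FreeGroup X) : X →₀ ℤ[Q] :=
  (magnusHom p w).left.toAdd

variable (X Q) in
/-- The `ℤ`-basis of translates `q • eₓ` of the free `ℤ[Q]`-module on `X`. -/
noncomputable def translateBasis : Basis (Σ _ : X, Q) ℤ (X →₀ ℤ[Q]) :=
  Finsupp.basis fun _ => MonoidAlgebra.basis Q ℤ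

lemma translateBasis_apply (x : X) (q : Q) :
    translateBasis X Q ⟨x, q⟩ = MonoidAlgebra.of ℤ Q q • Finsupp.single x 1 := by
  simp [translateBasis]

variable (p : FreeGroup X →* Q)

lemma right_magnusHom (w : FreeGroup X) : (magnusHom p w).right = p w := by
  have : SemidirectProduct.rightHom.comp (magnusHom p) = p := by ext; simp [magnusHom]
  exact DFunLike.congr_fun this w

lemma foxDeriv_mul (a b : FreeGroup X) :
    foxDeriv p (a * b) = foxDeriv p a + MonoidAlgebra.of ℤ Q (p a) • foxDeriv p b := by
  rw [foxDeriv, map_mul, SemidirectProduct.mul_left, right_magnusHom]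
  rfl

lemma foxDeriv_of (x : X) : foxDeriv p (FreeGroup.of x) = Finsupp.single x 1 := by
  simp [foxDeriv, magnusHom]

lemma foxDeriv_one : foxDeriv p 1 = 0 := by simp [foxDeriv]

lemma foxDeriv_inv (a : FreeGroup X) :
    foxDeriv p a⁻¹ = -(MonoidAlgebra.of ℤ Q (p a⁻¹) • foxDeriv p a) := by
  rw [eq_neg_iff_add_eq_zero, ← foxDeriv_mul, inv_mul_cancel, foxDeriv_one]

/-- The restriction of `foxDeriv p` to the kernel of `p`, where it is additive. -/
noncomputable def foxHom : p.ker →* Multiplicative (X →₀ ℤ[Q]) :=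
  .mk' (fun w => .ofAdd (foxDeriv p w)) fun a b => by
    rw [Subgroup.coe_mul, foxDeriv_mul, show p a = 1 from a.2, map_one, one_smul, ofAdd_add]

variable {p}

lemma foxDeriv_mul_of_mem_ker {a : FreeGroup X} (ha : a ∈ p.ker) (b : FreeGroup X) :
    foxDeriv p (a * b) = foxDeriv p a + foxDeriv p b := by
  rw [foxDeriv_mul, p.mem_ker.1 ha, map_one, one_smul]

lemma foxDeriv_inv_of_mem_ker {a : FreeGroup X} (ha : a ∈ p.ker) :
    foxDeriv p a⁻¹ = -foxDeriv p a := by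
  rw [foxDeriv_inv, map_inv, p.mem_ker.1 ha, inv_one, map_one, one_smul]

lemma foxDeriv_conj_of_mem_ker {a : FreeGroup X} (ha : a ∈ p.ker) (g : FreeGroup X) :
    foxDeriv p (g * a * g⁻¹) = MonoidAlgebra.of ℤ Q (p g) • foxDeriv p a := by
  rw [foxDeriv_mul, foxDeriv_mul, foxDeriv_inv, map_mul, p.mem_ker.1 ha, mul_one, smul_neg,
    smul_smul, ← map_mul, ← map_mul, mul_inv_cancel, map_one, map_one, one_smul,
    add_neg_cancel_comm]

section Kernel

variable (hp : Function.Surjective p)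

/-- The class in `p.ker / [p.ker, p.ker]` of `t q * w * (t (q * p w))⁻¹`, for a section `t` of `p`.
When `w` is a generator these are the Schreier generators of `p.ker`. -/
noncomputable def schreierClass (q : Q) (w : FreeGroup X) : Additive (Abelianization p.ker) :=
  .ofMul <| .of ⟨Function.surjInv hp q * w * (Function.surjInv hp (q * p w))⁻¹, by
    simp [MonoidHom.mem_ker, Function.surjInv_eq hp]⟩

lemma schreierClass_mul (q : Q) (a b : FreeGroup X) :
    schreierClass hp q (a * b) = schreierClass hp q a + schreierClass hp (q * p a) b := by
  rw [schreierClass, schreierClass, schreierClass, ← ofMul_mul, ← map_mul Abelianization.of]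
  congr 2
  ext
  simp [mul_assoc]

lemma schreierClass_one (q : Q) : schreierClass hp q 1 = 0 := by
  simpa using schreierClass_mul hp q 1 1

lemma schreierClass_one_left {w : FreeGroup X} (hw : w ∈ p.ker) :
    schreierClass hp 1 w = .ofMul (.of ⟨w, hw⟩) := by
  let t : p.ker := ⟨Function.surjInv hp 1, Function.surjInv_eq hp 1⟩
  have hconj : schreierClass hp 1 w = .ofMul (.of (t * ⟨w, hw⟩ * t⁻¹)) := by
    rw [schreierClass]
    congr 2
    ext
    simp [t, p.mem_ker.1 hw]
  rw [hconj, map_mul Abelianization.of, map_mul Abelianization.of, map_inv, mul_inv_cancel_comm]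

/-- The `ℤ`-linear map through which every `schreierClass` factors: it inverts
`foxDeriv p : p.ker / [p.ker, p.ker] → ℤ[Q] ^ X` on the image of the latter. -/
noncomputable def schreierLift : (X →₀ ℤ[Q]) →ₗ[ℤ] Additive (Abelianization p.ker) :=
  (translateBasis X Q).constr ℤ fun i => schreierClass hp i.2 (FreeGroup.of i.1)

lemma schreierLift_of_smul_foxDeriv (q : Q) (w : FreeGroup X) :
    schreierLift hp (MonoidAlgebra.of ℤ Q q • foxDeriv p w) = schreierClass hp q w := by
  induction w using FreeGroup.induction_on generalizing q with
  | C1 => rw [foxDeriv_one, smul_zero, map_zero, schreierClass_one]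
  | of x =>
    rw [foxDeriv_of, ← translateBasis_apply, schreierLift, Basis.constr_basis]
  | inv_of x ih =>
    have hcancel := schreierClass_mul hp q (FreeGroup.of x)⁻¹ (FreeGroup.of x)
    rw [inv_mul_cancel, schreierClass_one] at hcancel
    rw [eq_neg_of_add_eq_zero_left hcancel.symm, foxDeriv_inv, smul_neg, map_neg, smul_smul,
      ← map_mul, ih]
  | mul a b iha ihb =>
    rw [foxDeriv_mul, smul_add, map_add, smul_smul, ← map_mul, iha, ihb, schreierClass_mul]

end Kernel

theorem ker_foxHom (hp : Function.Surjective p) : (foxHom p).ker = commutator p.ker := by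
  refine le_antisymm (fun w hw => ?_) (Abelianization.commutator_subset_ker _)
  have hzero : foxDeriv p w = 0 := hw
  rw [← Abelianization.ker_of, MonoidHom.mem_ker, ← ofMul_eq_zero, ← schreierClass_one_left hp w.2,
    ← schreierLift_of_smul_foxDeriv, hzero, smul_zero, map_zero]

lemma foxDeriv_eq_zero_iff (hp : Function.Surjective p) {w : FreeGroup X} (hw : w ∈ p.ker) :
    foxDeriv p w = 0 ↔ w ∈ ⁅p.ker, p.ker⁆ := by
  rw [← Subgroup.map_subtype_commutator, ← ker_foxHom hp]
  exact ⟨fun h => ⟨⟨w, hw⟩, h, rfl⟩, by rintro ⟨w, h, rfl⟩; exact h⟩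

lemma image_foxDeriv_normalClosure {R : Set (FreeGroup X)} (hR : R ⊆ p.ker) :
    foxDeriv p '' Subgroup.normalClosure R =
      Submodule.span ℤ (foxDeriv p '' Group.conjugatesOfSet R) := by
  have hker : Subgroup.normalClosure R ≤ p.ker := Subgroup.normalClosure_le_normal hR
  apply subset_antisymm
  · rintro _ ⟨w, hw, rfl⟩
    induction hw using Subgroup.closure_induction with
    | mem w hw => exact Submodule.subset_span ⟨w, hw, rfl⟩
    | one => rw [foxDeriv_one]; exact zero_mem _
    | mul a b ha _ iha ihb =>
      rw [foxDeriv_mul_of_mem_ker (hker ha)]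
      exact add_mem iha ihb
    | inv a ha iha =>
      rw [foxDeriv_inv_of_mem_ker (hker ha)]
      exact neg_mem iha
  · intro v hv
    rw [SetLike.mem_coe, ← Submodule.mem_toAddSubgroup,
      Submodule.span_int_eq_addSubgroupClosure] at hv
    induction hv using AddSubgroup.closure_induction with
    | mem v hv =>
      obtain ⟨w, hw, rfl⟩ := hv
      exact ⟨w, Subgroup.subset_closure hw, rfl⟩
    | zero => exact ⟨1, one_mem _, foxDeriv_one p⟩
    | add _ _ _ _ iha ihb =>
      obtain ⟨⟨a, ha, rfl⟩, b, hb, rfl⟩ := And.intro iha ihb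
      exact ⟨a * b, mul_mem ha hb, foxDeriv_mul_of_mem_ker (hker ha) b⟩
    | neg _ _ ih =>
      obtain ⟨a, ha, rfl⟩ := ih
      exact ⟨a⁻¹, inv_mem ha, foxDeriv_inv_of_mem_ker (hker ha)⟩

lemma foxDeriv_mem_span_iff (hp : Function.Surjective p) {R : Set (FreeGroup X)} (hR : R ⊆ p.ker)
    {w : FreeGroup X} (hw : w ∈ p.ker) :
    foxDeriv p w ∈ Submodule.span ℤ (foxDeriv p '' Group.conjugatesOfSet R) ↔
      w ∈ Subgroup.normalClosure R ⊔ ⁅p.ker, p.ker⁆ := by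
  have hker : Subgroup.normalClosure R ≤ p.ker := Subgroup.normalClosure_le_normal hR
  rw [← SetLike.mem_coe, ← image_foxDeriv_normalClosure hR, Subgroup.mem_sup_of_normal_left]
  constructor
  · rintro ⟨u, hu, huw⟩
    refine ⟨u, hu, u⁻¹ * w, ?_, mul_inv_cancel_left u w⟩
    have hu' := inv_mem (hker hu)
    rw [← foxDeriv_eq_zero_iff hp (mul_mem hu' hw), foxDeriv_mul_of_mem_ker hu',
      foxDeriv_inv_of_mem_ker (hker hu), huw, neg_add_cancel]
  · rintro ⟨u, hu, c, hc, rfl⟩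
    have hcker : c ∈ p.ker := Subgroup.commutator_le_left _ _ hc
    refine ⟨u, hu, ?_⟩
    rw [foxDeriv_mul_of_mem_ker (hker hu), (foxDeriv_eq_zero_iff hp hcker).2 hc, add_zero]

open Pointwise in
lemma image_foxDeriv_conjugatesOfSet (hp : Function.Surjective p) {R : Set (FreeGroup X)}
    (hR : R ⊆ p.ker) :
    foxDeriv p '' Group.conjugatesOfSet R =
      Set.range (MonoidAlgebra.of ℤ Q) • (foxDeriv p '' R) := by
  ext v
  constructor
  · rintro ⟨w, hw, rfl⟩
    obtain ⟨r, hr, hrw⟩ := Group.mem_conjugatesOfSet_iff.1 hw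
    obtain ⟨g, rfl⟩ := isConj_iff.1 hrw
    exact ⟨_, ⟨p g, rfl⟩, _, ⟨r, hr, rfl⟩, (foxDeriv_conj_of_mem_ker (hR hr) g).symm⟩
  · rintro ⟨_, ⟨q, rfl⟩, _, ⟨r, hr, rfl⟩, rfl⟩
    obtain ⟨g, rfl⟩ := hp q
    exact ⟨g * r * g⁻¹, Group.mem_conjugatesOfSet_iff.2 ⟨r, hr, isConj_iff.2 ⟨g, rfl⟩⟩,
      foxDeriv_conj_of_mem_ker (hR hr) g⟩

lemma restrictScalars_span_image_foxDeriv (hp : Function.Surjective p) {R : Set (FreeGroup X)}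
    (hR : R ⊆ p.ker) :
    (Submodule.span ℤ[Q] (foxDeriv p '' R)).restrictScalars ℤ =
      Submodule.span ℤ (foxDeriv p '' Group.conjugatesOfSet R) := by
  have htop : Submodule.span ℤ (Set.range (MonoidAlgebra.of ℤ Q)) = ⊤ := by
    rw [← (MonoidAlgebra.basis Q ℤ).span_eq]
    rfl
  rw [← Submodule.span_smul_of_span_eq_top htop, image_foxDeriv_conjugatesOfSet hp hR]

section Norm

variable [Fintype X] [Fintype Q]

lemma l1Norm_of_smul (q : Q) (v : X →₀ ℤ[Q]) :
    l1Norm (translateBasis X Q) (MonoidAlgebra.of ℤ Q q • v) = l1Norm (translateBasis X Q) v := by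
  rw [l1Norm, l1Norm, Fintype.sum_sigma, Fintype.sum_sigma]
  refine Finset.sum_congr rfl fun x _ => ?_
  refine (Fintype.sum_equiv (Equiv.mulLeft q) _ _ fun r => ?_).symm
  simp [translateBasis, Finsupp.basis_repr, MonoidAlgebra.basis]

lemma l1Norm_foxDeriv_le [DecidableEq X] (p : FreeGroup X →* Q) (w : FreeGroup X) :
    l1Norm (translateBasis X Q) (foxDeriv p w) ≤ w.norm := by
  suffices ∀ l, l1Norm (translateBasis X Q) (foxDeriv p (.mk l)) ≤ l.length by
    rw [FreeGroup.norm]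
    simpa only [FreeGroup.mk_toWord] using this w.toWord
  intro l
  induction l with
  | nil => simp [← FreeGroup.one_eq_mk, foxDeriv_one, l1Norm]
  | cons y l ih =>
    obtain ⟨x, ε⟩ := y
    have hletter : l1Norm (translateBasis X Q) (foxDeriv p (.mk [(x, ε)])) = 1 := by
      have hx : l1Norm (translateBasis X Q) (foxDeriv p (.of x)) = 1 := by
        rw [foxDeriv_of]
        simpa [translateBasis_apply, MonoidAlgebra.one_def] using
          l1Norm_basis (translateBasis X Q) ⟨x, 1⟩
      cases ε with
      | true => exact hx
      | false =>
        have : FreeGroup.mk [(x, false)] = (FreeGroup.of x)⁻¹ := rfl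
        rw [this, foxDeriv_inv, l1Norm_neg, l1Norm_of_smul, hx]
    calc _ = l1Norm (translateBasis X Q) (foxDeriv p (.mk [(x, ε)] * .mk l)) := rfl
      _ ≤ 1 + l.length := by
        rw [foxDeriv_mul]
        refine (l1Norm_add_le _ _ _).trans ?_
        rw [hletter, l1Norm_of_smul]
        gcongr
      _ = _ := by simp [add_comm]

end Norm

end FoxCalculus

section Relators

variable {X Q : Type*} [Group Q] {p : FreeGroup X →* Q}

lemma exists_finite_subset_normalClosure_sup_commutator_ker [Finite X] [IsNoetherianRing ℤ[Q]]
    (hp : Function.Surjective p) {S : Set (FreeGroup X)} (hS : S ⊆ p.ker) :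
    ∃ R ⊆ S, R.Finite ∧ S ⊆ ↑(Subgroup.normalClosure R ⊔ ⁅p.ker, p.ker⁆) := by
  obtain ⟨R, hRS, hR, hspan⟩ : ∃ R ⊆ S, R.Finite ∧
      Submodule.span ℤ[Q] (foxDeriv p '' S) = Submodule.span ℤ[Q] (foxDeriv p '' R) := by
    rw [← Set.exists_subset_image_finite_and
      (p := fun T => Submodule.span ℤ[Q] (foxDeriv p '' S) = Submodule.span ℤ[Q] T)]
    obtain ⟨T, hTS, hT⟩ :=
      (Submodule.fg_span_iff_fg_span_finset_subset (R := ℤ[Q]) (foxDeriv p '' S)).1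
        (IsNoetherian.noetherian _)
    exact ⟨T, hTS, T.finite_toSet, hT⟩
  refine ⟨R, hRS, hR, fun w hw => ?_⟩
  rw [SetLike.mem_coe, ← foxDeriv_mem_span_iff hp (hRS.trans hS) (hS hw),
    ← restrictScalars_span_image_foxDeriv hp (hRS.trans hS), Submodule.restrictScalars_mem, ← hspan]
  exact Submodule.subset_span ⟨w, hw, rfl⟩

lemma fg_subgroup_of_commGroup {A : Type*} [CommGroup A] [Group.FG A] (S : Subgroup A) : S.FG := by
  have : Module.Finite ℤ (Additive A) := Module.Finite.iff_addGroup_fg.2 inferInstance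
  rw [Subgroup.fg_iff_add_fg, ← AddSubgroup.toIntSubmodule_toAddSubgroup S.toAddSubgroup,
    ← Submodule.fg_iff_addSubgroup_fg]
  exact IsNoetherian.noetherian _

lemma exists_finite_subset_le_closure_sup_inf_ker {G H : Type*} [Group G] [Group H] (f : G →* H)
    (K : Subgroup G) (hK : (K.map f).FG) :
    ∃ R ⊆ (K : Set G), R.Finite ∧ K ≤ Subgroup.closure R ⊔ K ⊓ f.ker := by
  obtain ⟨R, hRK, hR, hmap⟩ : ∃ R ⊆ (K : Set G), R.Finite ∧
      Subgroup.closure (f '' R) = K.map f := by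
    rw [← Set.exists_subset_image_finite_and (p := fun T => Subgroup.closure T = K.map f)]
    obtain ⟨T, hT, hTfin⟩ := (Subgroup.fg_iff _).1 hK
    refine ⟨T, ?_, hTfin, hT⟩
    rw [← Subgroup.coe_map, ← hT]
    exact Subgroup.subset_closure
  refine ⟨R, hRK, hR, fun k hk => ?_⟩
  have hclosure : Subgroup.closure R ≤ K := (Subgroup.closure_le K).2 hRK
  obtain ⟨c, hc, hck⟩ : f k ∈ (Subgroup.closure R).map f := by
    rw [MonoidHom.map_closure, hmap]
    exact ⟨k, hk, rfl⟩
  rw [← mul_inv_cancel_left c k]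
  refine Subgroup.mul_mem_sup hc (Subgroup.mem_inf.2 ⟨mul_mem (inv_mem (hclosure hc)) hk, ?_⟩)
  rw [MonoidHom.mem_ker, map_mul, map_inv, hck, inv_mul_cancel]

theorem exists_finite_subset_le_normalClosure_sup_commutator_commutator [Finite X]
    (K : Subgroup (FreeGroup X)) :
    ∃ R ⊆ (K : Set (FreeGroup X)), R.Finite ∧
      K ≤ Subgroup.normalClosure R ⊔ ⁅commutator (FreeGroup X), commutator (FreeGroup X)⁆ := by
  have hsurj : Function.Surjective (Abelianization.of (G := FreeGroup X)) :=
    QuotientGroup.mk_surjective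
  have : Group.FG (Abelianization (FreeGroup X)) := Group.fg_of_surjective hsurj
  have : IsNoetherianRing ℤ[Abelianization (FreeGroup X)] := Algebra.FiniteType.isNoetherianRing ℤ _
  obtain ⟨R₁, hR₁K, hR₁, hK⟩ := exists_finite_subset_le_closure_sup_inf_ker Abelianization.of K
    (fg_subgroup_of_commGroup _)
  obtain ⟨R₂, hR₂K, hR₂, hK'⟩ := exists_finite_subset_normalClosure_sup_commutator_ker hsurj
    (S := ↑(K ⊓ Abelianization.of.ker)) Set.inter_subset_right
  rw [SetLike.coe_subset_coe, Abelianization.ker_of] at hK'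
  rw [Abelianization.ker_of] at hK
  refine ⟨R₁ ∪ R₂, Set.union_subset hR₁K (hR₂K.trans Set.inter_subset_left), hR₁.union hR₂,
    hK.trans (sup_le ?_ (hK'.trans (sup_le_sup_right ?_ _)))⟩
  · exact le_sup_of_le_left (Subgroup.closure_le_normalClosure.trans
      (Subgroup.normalClosure_mono Set.subset_union_left))
  · exact Subgroup.normalClosure_mono Set.subset_union_right

end Relators

section TorsionOfAbelianization

lemma card_torsion_le_of_injective {A B : Type*} [CommGroup A] [AddCommGroup B]
    [Finite (AddCommGroup.torsion B)] (f : A →* Multiplicative B) (hf : Function.Injective f) :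
    Nat.card (CommGroup.torsion A) ≤ Nat.card (AddCommGroup.torsion B) := by
  have hmem (a : CommGroup.torsion A) : (f a).toAdd ∈ AddCommGroup.torsion B :=
    isOfFinOrder_ofAdd_iff.1 (f.isOfFinOrder a.2)
  exact Nat.card_le_card_of_injective (fun a => (⟨(f a).toAdd, hmem a⟩ : AddCommGroup.torsion B))
    fun a b hab => Subtype.ext (hf (Multiplicative.toAdd.injective (congrArg Subtype.val hab)))

variable {X Q : Type*} [Group Q] {p : FreeGroup X →* Q}

theorem card_torsion_le_of_ker_eq [Finite X] [DecidableEq X] [Finite Q]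
    (hp : Function.Surjective p) {R : Set (FreeGroup X)} (hR : R ⊆ p.ker) {L : ℕ} (hL : 1 ≤ L)
    (hRL : ∀ r ∈ R, r.norm ≤ L) {A : Type*} [CommGroup A] (f : p.ker →* A)
    (hf : Function.Surjective f)
    (hker : f.ker = (Subgroup.normalClosure R ⊔ ⁅p.ker, p.ker⁆).subgroupOf p.ker) :
    Nat.card (CommGroup.torsion A) ≤ (L ^ Nat.card X) ^ Nat.card Q := by
  cases nonempty_fintype X
  cases nonempty_fintype Q
  set M := Submodule.span ℤ (foxDeriv p '' Group.conjugatesOfSet R)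
  have hnorm : ∀ v ∈ foxDeriv p '' Group.conjugatesOfSet R, l1Norm (translateBasis X Q) v ≤ L := by
    rw [image_foxDeriv_conjugatesOfSet hp hR]
    rintro _ ⟨_, ⟨q, rfl⟩, _, ⟨r, hr, rfl⟩, rfl⟩
    change l1Norm _ (MonoidAlgebra.of ℤ Q q • foxDeriv p r) ≤ L
    rw [l1Norm_of_smul]
    exact (l1Norm_foxDeriv_le p r).trans (mod_cast hRL r hr)
  obtain ⟨hfin, hcard⟩ :=
    finite_torsion_quotient_span_and_card_le (translateBasis X Q) hL hnorm
  let g : p.ker →* Multiplicative ((X →₀ ℤ[Q]) ⧸ M) :=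
    M.mkQ.toAddMonoidHom.toMultiplicative.comp (foxHom p)
  have hg : g.ker = f.ker := by
    ext w
    rw [hker, Subgroup.mem_subgroupOf, ← foxDeriv_mem_span_iff hp hR w.2]
    exact Submodule.Quotient.mk_eq_zero M
  have hinj : Function.Injective (f.liftOfSurjective hf ⟨g, hg.ge⟩) := by
    rw [injective_iff_map_eq_one]
    intro a ha
    obtain ⟨w, rfl⟩ := hf a
    rw [MonoidHom.liftOfRightInverse_comp_apply] at ha
    exact hg.le ha
  calc Nat.card (CommGroup.torsion A) ≤ _ := card_torsion_le_of_injective _ hinj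
    _ ≤ L ^ Fintype.card (Σ _ : X, Q) := hcard
    _ = (L ^ Nat.card X) ^ Nat.card Q := by simp [pow_mul]

lemma abelianization_of_eq_one_iff {F G : Type*} [Group F] [Group G] {π : F →* G}
    (hπ : Function.Surjective π) (H : Subgroup G) {w : F} (hw : π w ∈ H) :
    Abelianization.of (⟨π w, hw⟩ : H) = 1 ↔ w ∈ π.ker ⊔ ⁅H.comap π, H.comap π⁆ := by
  rw [sup_comm, ← Subgroup.comap_map_eq, Subgroup.mem_comap, Subgroup.map_commutator,
    Subgroup.map_comap_eq_self_of_surjective hπ, ← Subgroup.map_subtype_commutator,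
    ← MonoidHom.mem_ker, Abelianization.ker_of]
  exact (Subgroup.mem_map_iff_mem H.subtype_injective (x := ⟨π w, hw⟩)).symm

theorem card_torsion_abelianization_le {G : Type*} [Group G] [Finite X] [DecidableEq X]
    {π : FreeGroup X →* G} (hπ : Function.Surjective π) (H : Subgroup G) [H.Normal] [H.FiniteIndex]
    {R : Set (FreeGroup X)} (hRker : R ⊆ π.ker)
    (hR : π.ker ≤ Subgroup.normalClosure R ⊔ ⁅H.comap π, H.comap π⁆)
    {L : ℕ} (hL : 1 ≤ L) (hRL : ∀ r ∈ R, r.norm ≤ L) :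
    Nat.card (CommGroup.torsion (Abelianization H)) ≤ (L ^ Nat.card X) ^ H.index := by
  let p := (QuotientGroup.mk' H).comp π
  have hker : p.ker = H.comap π := by rw [← MonoidHom.comap_ker, QuotientGroup.ker_mk']
  have hmem (w : p.ker) : π w ∈ H := Subgroup.mem_comap.1 (hker ▸ w.2)
  let f : p.ker →* Abelianization H :=
    Abelianization.of.comp ((π.comp p.ker.subtype).codRestrict H hmem)
  refine card_torsion_le_of_ker_eq (p := p) ((QuotientGroup.mk'_surjective H).comp hπ)
    (hRker.trans (hker ▸ Subgroup.ker_le_comap π H)) hL hRL f ?_ ?_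
  · intro x
    obtain ⟨h, rfl⟩ := QuotientGroup.mk_surjective x
    obtain ⟨w, hw⟩ := hπ h
    exact ⟨⟨w, hker.ge (Subgroup.mem_comap.2 (hw ▸ h.2))⟩,
      congrArg Abelianization.of (Subtype.ext hw)⟩
  · have hsup : Subgroup.normalClosure R ⊔ ⁅p.ker, p.ker⁆ = π.ker ⊔ ⁅H.comap π, H.comap π⁆ := by
      rw [hker]
      exact le_antisymm (sup_le_sup_right (Subgroup.normalClosure_le_normal hRker) _)
        (sup_le hR le_sup_right)
    ext w
    rw [Subgroup.mem_subgroupOf, hsup]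
    exact abelianization_of_eq_one_iff hπ H (hmem w)

end TorsionOfAbelianization

theorem stmt_9_general (G : Type*) [Group G] [Group.FG G] :
    ∃ C : ℕ, ∀ H : Subgroup G, ⁅(⊤ : Subgroup G), (⊤ : Subgroup G)⁆ ≤ H → H.index ≠ 0 →
      Nat.card (CommGroup.torsion (Abelianization H)) ≤ C ^ H.index := by
  classical
  obtain ⟨X, _, π, hπ⟩ := Group.fg_iff_exists_freeGroup_hom_surjective_finite.1 ‹Group.FG G›
  obtain ⟨R, hRker, hRfin, hR⟩ :=
    exists_finite_subset_le_normalClosure_sup_commutator_commutator π.ker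
  obtain ⟨L, hL⟩ := (hRfin.image FreeGroup.norm).bddAbove
  refine ⟨(L + 1) ^ Nat.card X, fun H hH hindex => ?_⟩
  have : H.Normal := .of_commutator_le G hH
  have : H.FiniteIndex := ⟨hindex⟩
  have hderived : commutator (FreeGroup X) ≤ H.comap π := by
    rw [commutator_def, ← Subgroup.map_le_iff_le_comap, Subgroup.map_commutator]
    exact (Subgroup.commutator_mono le_top le_top).trans hH
  exact card_torsion_abelianization_le hπ H hRker
    (hR.trans (sup_le_sup_left (Subgroup.commutator_mono hderived hderived) _))
    (Nat.le_add_left 1 L) fun r hr => (hL ⟨r, hr, rfl⟩).trans L.le_succ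

theorem stmt_9 (G : Type*) [Group G] [Group.FG G] (hG : IsMetabelian G) :
    ∃ C : ℕ, ∀ H : Subgroup G, ⁅(⊤ : Subgroup G), (⊤ : Subgroup G)⁆ ≤ H → H.index ≠ 0 →
      Nat.card (CommGroup.torsion (Abelianization H)) ≤ C ^ H.index :=
  stmt_9_general G
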